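/- Let |p|<1 and let t, b_1,…,b_n, a_1,…,a_n ∈ ℂ* with ∏_{k=1}^n a_k ≠ ∏_{k=1}^n b_k modulo integer powers of p, the a_r pairwise distinct modulo powers of p, and t/a_r ∉ {p^m : m ∈ ℤ}. Then ∏_{k=1}^n θ(t/b_k;p)/θ(t/a_k;p) = ∑_{r=1}^n [θ(t a_1⋯a_n/(a_r b_1⋯b_n);p) / (θ(t/a_r;p) θ(a_1⋯a_n/(b_1⋯b_n);p))] · [∏_{j=1}^n θ(a_r/b_j;p)] / [∏_{j≠r} θ(a_r/a_j;p)]. -/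

import Mathlib

noncomputable def qPochhammerInf (z q : ℂ) : ℂ := ∏' j : ℕ, (1 - z * q ^ j)

noncomputable def theta (z p : ℂ) : ℂ :=
  ∏' j : ℕ, (1 - z * p ^ j) * (1 - p ^ (j + 1) * z⁻¹)

noncomputable def ellGamma (z p q : ℂ) : ℂ :=
  ∏' jk : ℕ × ℕ,
    (1 - z⁻¹ * p ^ (jk.1 + 1) * q ^ (jk.2 + 1)) / (1 - z * p ^ jk.1 * q ^ jk.2)

/-!
By Jacobi's triple product, `(p; p)_∞ θ(z; p)` is the Laurent series `∑ (-1)^k p^(k(k-1)/2) z^k`.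
Sorting the double series of `θ(u; p) θ(v; p)` by the parity of the sum of its two indices writes
it as a `2 × 2` determinant in theta series of `uv` and `u/v` with nome `p ^ 2`, so the Weierstrass
three-term relation is a Plücker relation. Divided by its denominators, it is Fay's identity for
Kronecker's theta function, which is what is needed to adjoin one zero `b j` and one pole `a i` to
a partial fraction expansion. The induction could only stall if `∏ a / ∏ b` became a power of `p`
once the pair is removed; for two poles that are distinct modulo powers of `p` this cannot happen
for both.
-/

open Filter Topology

section QPochhammer

variable {q : ℂ}

theorem summable_norm_neg_mul_pow (hq : ‖q‖ < 1) (z : ℂ) :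
    Summable fun j : ℕ ↦ ‖-(z * q ^ j)‖ := by
  simpa using (summable_geometric_of_lt_one (norm_nonneg q) hq).mul_left ‖z‖

theorem multipliable_one_sub_mul_pow (hq : ‖q‖ < 1) (z : ℂ) :
    Multipliable fun j : ℕ ↦ 1 - z * q ^ j := by
  simpa [sub_eq_add_neg] using multipliable_one_add_of_summable (summable_norm_neg_mul_pow hq z)

theorem tendsto_prod_range_qPochhammerInf (hq : ‖q‖ < 1) (z : ℂ) :
    Tendsto (fun n ↦ ∏ j ∈ Finset.range n, (1 - z * q ^ j)) atTop (𝓝 (qPochhammerInf z q)) :=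
  (multipliable_one_sub_mul_pow hq z).tendsto_prod_tprod_nat

theorem qPochhammerInf_eq_prod_range_mul (hq : ‖q‖ < 1) (z : ℂ) (n : ℕ) :
    qPochhammerInf z q =
      (∏ j ∈ Finset.range n, (1 - z * q ^ j)) * qPochhammerInf (z * q ^ n) q := by
  have hshift : (fun j : ℕ ↦ 1 - z * q ^ (j + n)) = fun j ↦ 1 - z * q ^ n * q ^ j :=
    funext fun j ↦ by ring
  rw [qPochhammerInf, ← Multipliable.prod_mul_tprod_nat_mul'
    (hshift ▸ multipliable_one_sub_mul_pow hq (z * q ^ n)), hshift, qPochhammerInf]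

theorem qPochhammerInf_eq_one_sub_mul (hq : ‖q‖ < 1) (z : ℂ) :
    qPochhammerInf z q = (1 - z) * qPochhammerInf (z * q) q := by
  simpa using qPochhammerInf_eq_prod_range_mul hq z 1

theorem qPochhammerInf_eq_zero_iff (hq : ‖q‖ < 1) {z : ℂ} :
    qPochhammerInf z q = 0 ↔ ∃ j : ℕ, z * q ^ j = 1 := by
  refine ⟨fun h ↦ ?_, fun ⟨j, hj⟩ ↦ tprod_of_exists_eq_zero ⟨j, by simp [hj]⟩⟩
  contrapose! h
  have := tprod_one_add_ne_zero_of_summable (f := fun j : ℕ ↦ -(z * q ^ j))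
    (fun j hj ↦ h j (by linear_combination -hj)) (summable_norm_neg_mul_pow hq z)
  simpa [qPochhammerInf, sub_eq_add_neg] using this

theorem qPochhammerInf_self_ne_zero (hq : ‖q‖ < 1) : qPochhammerInf q q ≠ 0 := by
  rw [Ne, qPochhammerInf_eq_zero_iff hq]
  rintro ⟨j, hj⟩
  have hlt : ‖q ^ (j + 1)‖ < 1 := by
    simpa only [norm_pow] using pow_lt_one₀ (norm_nonneg q) hq j.succ_ne_zero
  rw [pow_succ', hj, norm_one] at hlt
  exact hlt.false

theorem tendsto_qPochhammerInf_mul_pow (hq : ‖q‖ < 1) {z : ℂ} (hz : qPochhammerInf z q ≠ 0) :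
    Tendsto (fun n : ℕ ↦ qPochhammerInf (z * q ^ n) q) atTop (𝓝 1) := by
  have hlim := (tendsto_prod_range_qPochhammerInf hq z).inv₀ hz |>.const_mul (qPochhammerInf z q)
  rw [mul_inv_cancel₀ hz] at hlim
  refine hlim.congr fun n ↦ ?_
  have hsplit := qPochhammerInf_eq_prod_range_mul hq z n
  have hprod := left_ne_zero_of_mul (hsplit ▸ hz)
  rw [hsplit]
  field_simp

theorem qPochhammerInf_zpow_of_nonpos (hq : ‖q‖ < 1) (hq0 : q ≠ 0) {m : ℤ} (hm : m ≤ 0) :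
    qPochhammerInf (q ^ m) q = 0 := by
  obtain ⟨j, rfl⟩ := Int.exists_eq_neg_ofNat hm
  exact (qPochhammerInf_eq_zero_iff hq).2 ⟨j, by simp [hq0]⟩

theorem tendsto_qPochhammerInf_zpow (hq : ‖q‖ < 1) (hq0 : q ≠ 0) :
    Tendsto (fun m : ℤ ↦ qPochhammerInf (q ^ m) q) atTop (𝓝 1) := by
  have hnat := tendsto_qPochhammerInf_mul_pow hq (qPochhammerInf_self_ne_zero hq)
  have hint : Tendsto (fun m : ℤ ↦ (m - 1).toNat) atTop atTop :=
    tendsto_atTop.2 fun b ↦ (eventually_ge_atTop (b + 1 : ℤ)).mono fun m hm ↦ by omega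
  refine (hnat.comp hint).congr' ?_
  filter_upwards [eventually_ge_atTop 1] with m hm
  rw [Function.comp_apply, ← zpow_natCast, ← zpow_one_add₀ hq0]
  congr 2
  omega

theorem exists_norm_qPochhammerInf_zpow_le (hq : ‖q‖ < 1) (hq0 : q ≠ 0) :
    ∃ M, ∀ m : ℤ, ‖qPochhammerInf (q ^ m) q‖ ≤ M := by
  obtain ⟨M, hM⟩ := (tendsto_qPochhammerInf_mul_pow hq
    (qPochhammerInf_self_ne_zero hq)).norm.bddAbove_range
  refine ⟨M, fun m ↦ ?_⟩
  rcases le_or_gt m 0 with hm | hm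
  · rw [qPochhammerInf_zpow_of_nonpos hq hq0 hm, norm_zero]
    exact (norm_nonneg _).trans (hM ⟨0, rfl⟩)
  · refine hM ⟨(m - 1).toNat, ?_⟩
    have : (1 : ℤ) + (m - 1).toNat = m := by omega
    simp only [← zpow_natCast, ← zpow_one_add₀ hq0, this]

end QPochhammer

/-- The coefficient of `z ^ k` in the Laurent expansion of `(p; p)_∞ θ(z; p)`. -/
noncomputable def thetaCoeff (p : ℂ) (k : ℤ) : ℂ := (-1) ^ k * p ^ (k * (k - 1) / 2)

/-- The Laurent series of `(p; p)_∞ θ(z; p)`, i.e. the series side of Jacobi's triple product. -/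
noncomputable def thetaSeries (z p : ℂ) : ℂ := ∑' k : ℤ, thetaCoeff p k * z ^ k

/-- The theta series with its `k`-th term damped by `(p^(n-k+1); p)_∞`, which vanishes for `k > n`.
It interpolates between a power series in `z⁻¹` (for `n = 0`) and `thetaSeries` (as `n → ∞`). -/
noncomputable def truncatedThetaSeries (n : ℤ) (z p : ℂ) : ℂ :=
  ∑' k : ℤ, thetaCoeff p k * z ^ k * qPochhammerInf (p ^ (n - k + 1)) p

section ThetaSeries

variable {p : ℂ}

theorem thetaCoeff_add_one (hp0 : p ≠ 0) (k : ℤ) :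
    thetaCoeff p (k + 1) = -p ^ k * thetaCoeff p k := by
  have hexp : (k + 1) * (k + 1 - 1) / 2 = k * (k - 1) / 2 + k := by
    rw [← Int.add_mul_ediv_right _ _ two_ne_zero]
    ring_nf
  rw [thetaCoeff, hexp, zpow_add₀ hp0, zpow_add_one₀ (by simp), thetaCoeff]
  ring

theorem thetaCoeff_neg (hp0 : p ≠ 0) (k : ℤ) : thetaCoeff p (-k) = thetaCoeff p k * p ^ k := by
  have hexp : -k * (-k - 1) / 2 = k * (k - 1) / 2 + k := by
    rw [← Int.add_mul_ediv_right _ _ two_ne_zero]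
    ring_nf
  rw [thetaCoeff, hexp, zpow_add₀ hp0, zpow_neg, ← inv_zpow, inv_neg_one, thetaCoeff, mul_assoc]

theorem thetaCoeff_sq (p : ℂ) (k : ℤ) : thetaCoeff (p ^ 2) k = (-1) ^ k * p ^ (k * (k - 1)) := by
  rw [thetaCoeff, ← zpow_natCast, ← zpow_mul, Nat.cast_ofNat,
    Int.mul_ediv_cancel' (Int.even_mul_pred_self k).two_dvd]

theorem thetaCoeff_add_mul_thetaCoeff_sub (hp0 : p ≠ 0) (k l : ℤ) :
    thetaCoeff p (k + l) * thetaCoeff p (k - l) = p ^ (k * (k - 1) + l ^ 2) := by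
  have hexp : (k + l) * (k + l - 1) / 2 + (k - l) * (k - l - 1) / 2 = k * (k - 1) + l ^ 2 := by
    rw [← Int.add_ediv_of_dvd_left (Int.even_mul_pred_self _).two_dvd]
    refine Int.ediv_eq_of_eq_mul_right two_ne_zero ?_
    ring
  have hsign : (-1 : ℂ) ^ (k + l) * (-1) ^ (k - l) = 1 := by
    rw [← zpow_add₀ (by simp), show k + l + (k - l) = k + k by ring]
    exact Even.neg_one_zpow ⟨k, rfl⟩
  rw [← hexp, zpow_add₀ hp0, thetaCoeff, thetaCoeff]
  linear_combination p ^ ((k + l) * (k + l - 1) / 2) * p ^ ((k - l) * (k - l - 1) / 2) * hsign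

theorem summable_thetaSeries_nat (hp : ‖p‖ < 1) (hp0 : p ≠ 0) {z : ℂ} (hz : z ≠ 0) :
    Summable fun n : ℕ ↦ thetaCoeff p n * z ^ n := by
  have hterm (n : ℕ) : thetaCoeff p n * z ^ n ≠ 0 := by simp [thetaCoeff, hp0, hz, zpow_ne_zero]
  refine summable_of_ratio_test_tendsto_lt_one zero_lt_one (.of_forall hterm) ?_
  have hlim : Tendsto (fun n : ℕ ↦ ‖p ^ n * z‖) atTop (𝓝 0) := by
    simpa using ((tendsto_pow_atTop_nhds_zero_of_norm_lt_one hp).mul_const z).norm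
  refine hlim.congr fun n ↦ ?_
  rw [eq_div_iff (norm_ne_zero_iff.2 (hterm n)), ← norm_mul, Nat.cast_succ, thetaCoeff_add_one hp0,
    pow_succ, zpow_natCast, ← norm_neg]
  congr 1
  ring

theorem summable_thetaSeries (hp : ‖p‖ < 1) (hp0 : p ≠ 0) {z : ℂ} (hz : z ≠ 0) :
    Summable fun k : ℤ ↦ thetaCoeff p k * z ^ k := by
  refine .of_nat_of_neg (by simpa using summable_thetaSeries_nat hp hp0 hz) ?_
  refine (summable_thetaSeries_nat hp hp0 (div_ne_zero hp0 hz)).congr fun n ↦ ?_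
  rw [thetaCoeff_neg hp0, zpow_neg, div_pow, zpow_natCast, zpow_natCast]
  ring

theorem summable_truncatedThetaSeries (hp : ‖p‖ < 1) (hp0 : p ≠ 0) (n : ℤ) {z : ℂ} (hz : z ≠ 0) :
    Summable fun k : ℤ ↦ thetaCoeff p k * z ^ k * qPochhammerInf (p ^ (n - k + 1)) p := by
  obtain ⟨M, hM⟩ := exists_norm_qPochhammerInf_zpow_le hp hp0
  refine .of_norm_bounded ((summable_thetaSeries hp hp0 hz).norm.mul_right M) fun k ↦ ?_
  rw [norm_mul]
  gcongr
  exact hM _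

theorem truncatedThetaSeries_add_one_eq_mul_left (hp0 : p ≠ 0) (n : ℤ) {z : ℂ}
    (hz : z ≠ 0) : truncatedThetaSeries (n + 1) z p = -z * truncatedThetaSeries n (p * z) p := by
  rw [truncatedThetaSeries, truncatedThetaSeries, ← (Equiv.addRight (1 : ℤ)).tsum_eq,
    ← tsum_mul_left]
  refine tsum_congr fun k ↦ ?_
  rw [Equiv.coe_addRight, thetaCoeff_add_one hp0, mul_zpow, zpow_add_one₀ hz,
    show n + 1 - (k + 1) + 1 = n - k + 1 by ring]
  ring

theorem truncatedThetaSeries_add_one (hp : ‖p‖ < 1) (hp0 : p ≠ 0) (n : ℤ) {z : ℂ} (hz : z ≠ 0) :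
    truncatedThetaSeries (n + 1) z p = (1 - z * p ^ n) * truncatedThetaSeries n z p := by
  have hdiff : truncatedThetaSeries n z p =
      truncatedThetaSeries (n + 1) z p - p ^ (n+1) * truncatedThetaSeries (n + 1) (z / p) p := by
    rw [truncatedThetaSeries, truncatedThetaSeries, truncatedThetaSeries, ← tsum_mul_left,
      ← (summable_truncatedThetaSeries hp hp0 _ hz).tsum_sub
        ((summable_truncatedThetaSeries hp hp0 _ (div_ne_zero hz hp0)).mul_left _)]
    refine tsum_congr fun k ↦ ?_
    rw [qPochhammerInf_eq_one_sub_mul hp, ← zpow_add_one₀ hp0, div_zpow,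
      show n + 1 - k + 1 = n - k + 1 + 1 by ring, show n - k + 1 = n + 1 - k by ring,
      zpow_sub₀ hp0]
    ring
  rw [truncatedThetaSeries_add_one_eq_mul_left hp0 n (div_ne_zero hz hp0),
    mul_div_cancel₀ _ hp0, zpow_add_one₀ hp0] at hdiff
  field_simp at hdiff
  linear_combination -hdiff

theorem tendsto_truncatedThetaSeries (hp : ‖p‖ < 1) (hp0 : p ≠ 0) {z : ℂ} (hz : z ≠ 0) :
    Tendsto (fun n : ℕ ↦ truncatedThetaSeries n z p) atTop (𝓝 (thetaSeries z p)) := by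
  obtain ⟨M, hM⟩ := exists_norm_qPochhammerInf_zpow_le hp hp0
  refine tendsto_tsum_of_dominated_convergence ((summable_thetaSeries hp hp0 hz).norm.mul_right M)
    (fun k ↦ ?_) (.of_forall fun n k ↦ ?_)
  · have hexp : Tendsto (fun n : ℕ ↦ (n - k + 1 : ℤ)) atTop atTop :=
      tendsto_atTop_add_const_right _ _
        (tendsto_atTop_add_const_right _ (-k) tendsto_natCast_atTop_atTop)
    simpa using ((tendsto_qPochhammerInf_zpow hp hp0).comp hexp).const_mul (thetaCoeff p k * z ^ k)
  · rw [norm_mul]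
    gcongr
    exact hM _

theorem truncatedThetaSeries_zero_eq_tsum_nat (hp : ‖p‖ < 1) (hp0 : p ≠ 0) (z : ℂ) :
    truncatedThetaSeries 0 z p =
      ∑' j : ℕ, thetaCoeff p j * (p / z) ^ j * qPochhammerInf (p ^ (j + 1)) p := by
  rw [truncatedThetaSeries, ← (Equiv.neg ℤ).tsum_eq,
    ← Function.Injective.tsum_eq Nat.cast_injective]
  · refine tsum_congr fun j ↦ ?_
    rw [Equiv.neg_apply, thetaCoeff_neg hp0, zpow_neg, div_pow, zpow_natCast, zpow_natCast,
      show (0 - -(j : ℤ) + 1) = (j + 1 : ℕ) by push_cast; ring, zpow_natCast]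
    ring
  · intro k hk
    by_contra hneg
    have hk0 : k < 0 := by
      by_contra! h
      exact hneg ⟨k.toNat, Int.toNat_of_nonneg h⟩
    have hexp : 0 - Equiv.neg ℤ k + 1 ≤ 0 := by rw [Equiv.neg_apply]; omega
    exact hk (mul_eq_zero_of_right _ (qPochhammerInf_zpow_of_nonpos hp hp0 hexp))

theorem tendsto_truncatedThetaSeries_zero_div_pow (hp : ‖p‖ < 1) (hp0 : p ≠ 0) {z : ℂ}
    (hz : z ≠ 0) :
    Tendsto (fun n : ℕ ↦ truncatedThetaSeries 0 (z / p ^ n) p) atTop (𝓝 (qPochhammerInf p p)) := by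
  obtain ⟨M, hM⟩ := exists_norm_qPochhammerInf_zpow_le hp hp0
  have hpow (n j : ℕ) : (p / (z / p ^ n)) ^ j = (p / z) ^ j * (p ^ j) ^ n := by
    rw [div_div_eq_mul_div, mul_div_right_comm, mul_pow, pow_right_comm]
  have hsum := (summable_thetaSeries_nat hp hp0 (div_ne_zero hp0 hz)).norm.mul_right M
  rw [← tsum_ite_eq (0 : ℕ) fun _ ↦ qPochhammerInf p p]
  simp only [truncatedThetaSeries_zero_eq_tsum_nat hp hp0, hpow]
  refine tendsto_tsum_of_dominated_convergence hsum (fun j ↦ ?_) (.of_forall fun n j ↦ ?_)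
  · rcases eq_or_ne j 0 with rfl | hj
    · simp [thetaCoeff]
    · have hpj : ‖p ^ j‖ < 1 := by simpa using pow_lt_one₀ (norm_nonneg p) hp hj
      simpa [hj] using (((tendsto_pow_atTop_nhds_zero_of_norm_lt_one hpj).const_mul
        ((p / z) ^ j)).const_mul (thetaCoeff p j)).mul_const (qPochhammerInf (p ^ (j + 1)) p)
  · have hle : ‖(p ^ j) ^ n‖ ≤ 1 := by
      simpa [← pow_mul] using pow_le_one₀ (norm_nonneg p) hp.le
    rw [norm_mul, ← mul_assoc, norm_mul _ ((p ^ j) ^ n)]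
    gcongr
    · exact mul_le_of_le_one_right (norm_nonneg _) hle
    · exact_mod_cast hM (j + 1 : ℕ)

theorem truncatedThetaSeries_natCast (hp : ‖p‖ < 1) (hp0 : p ≠ 0) {z : ℂ} (hz : z ≠ 0) (n : ℕ) :
    truncatedThetaSeries n z p =
      (∏ j ∈ Finset.range n, (1 - z * p ^ j)) * truncatedThetaSeries 0 z p := by
  induction n with
  | zero => simp
  | succ n ih =>
    rw [Nat.cast_succ, truncatedThetaSeries_add_one hp hp0 _ hz, ih, Finset.prod_range_succ,
      zpow_natCast]
    ring

theorem truncatedThetaSeries_zero_eq_mul_div (hp : ‖p‖ < 1) (hp0 : p ≠ 0) {z : ℂ} (hz : z ≠ 0) :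
    truncatedThetaSeries 0 z p = (1 - p / z) * truncatedThetaSeries 0 (z / p) p := by
  have hzp := div_ne_zero hz hp0
  have h := truncatedThetaSeries_add_one hp hp0 0 hzp
  rw [truncatedThetaSeries_add_one_eq_mul_left hp0 0 hzp, mul_div_cancel₀ _ hp0, zpow_zero,
    mul_one] at h
  field_simp at h ⊢
  linear_combination -h

theorem truncatedThetaSeries_zero_eq_prod_mul (hp : ‖p‖ < 1) (hp0 : p ≠ 0) {z : ℂ} (hz : z ≠ 0)
    (n : ℕ) :
    truncatedThetaSeries 0 z p =
      (∏ j ∈ Finset.range n, (1 - p * z⁻¹ * p ^ j)) * truncatedThetaSeries 0 (z / p ^ n) p := by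
  induction n with
  | zero => simp
  | succ n ih =>
    have hfactor : p / (z / p ^ n) = p * z⁻¹ * p ^ n := by field_simp
    rw [ih, truncatedThetaSeries_zero_eq_mul_div hp hp0 (div_ne_zero hz (pow_ne_zero n hp0)),
      Finset.prod_range_succ, hfactor, div_div, ← pow_succ, ← mul_assoc]

theorem truncatedThetaSeries_zero (hp : ‖p‖ < 1) (hp0 : p ≠ 0) {z : ℂ} (hz : z ≠ 0) :
    truncatedThetaSeries 0 z p = qPochhammerInf (p * z⁻¹) p * qPochhammerInf p p :=
  tendsto_nhds_unique
    (tendsto_const_nhds.congr fun n ↦ truncatedThetaSeries_zero_eq_prod_mul hp hp0 hz n)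
    ((tendsto_prod_range_qPochhammerInf hp _).mul
      (tendsto_truncatedThetaSeries_zero_div_pow hp hp0 hz))

theorem theta_eq_qPochhammerInf_mul (hp : ‖p‖ < 1) (z : ℂ) :
    theta z p = qPochhammerInf z p * qPochhammerInf (p * z⁻¹) p := by
  rw [qPochhammerInf, qPochhammerInf, theta, ← (multipliable_one_sub_mul_pow hp _).tprod_mul
    (multipliable_one_sub_mul_pow hp _)]
  refine tprod_congr fun j ↦ ?_
  ring

theorem jacobi_triple_product (hp : ‖p‖ < 1) (hp0 : p ≠ 0) {z : ℂ}
    (hz : z ≠ 0) : thetaSeries z p = qPochhammerInf p p * theta z p := by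
  have hlim := ((tendsto_prod_range_qPochhammerInf hp z).mul_const _).congr fun n ↦
    (truncatedThetaSeries_natCast hp hp0 hz n).symm
  rw [tendsto_nhds_unique (tendsto_truncatedThetaSeries hp hp0 hz) hlim,
    truncatedThetaSeries_zero hp hp0 hz, theta_eq_qPochhammerInf_mul hp]
  ring

theorem bijective_sumElim_add_sub :
    Function.Bijective (Sum.elim (fun x : ℤ × ℤ ↦ (x.1 + x.2, x.1 - x.2))
      fun x : ℤ × ℤ ↦ (x.1 + x.2, x.1 - x.2 + 1)) := by
  refine ⟨?_, fun ⟨k, l⟩ ↦ ?_⟩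
  · rintro (⟨k, l⟩ | ⟨k, l⟩) (⟨k', l'⟩ | ⟨k', l'⟩) h <;>
      simp only [Sum.elim_inl, Sum.elim_inr, Prod.mk.injEq] at h <;> grind
  · rcases Int.even_or_odd' (k + l) with ⟨m, h | h⟩
    · exact ⟨.inl (m, k - m), by grind⟩
    · exact ⟨.inr (m, k - m), by grind⟩

theorem tsum_int_prod_int_eq_add {E : Type*} [NormedAddCommGroup E] [CompleteSpace E]
    {f : ℤ × ℤ → E} (hf : Summable f) :
    ∑' x, f x = ∑' x : ℤ × ℤ, f (x.1 + x.2, x.1 - x.2) +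
      ∑' x : ℤ × ℤ, f (x.1 + x.2, x.1 - x.2 + 1) := by
  let e := Equiv.ofBijective _ bijective_sumElim_add_sub
  have hfe : Summable fun x ↦ f (e x) := e.summable_iff.2 hf
  rw [← e.tsum_eq]
  exact Summable.tsum_sum (hfe.comp_injective Sum.inl_injective)
    (hfe.comp_injective Sum.inr_injective)

theorem thetaSeries_sq_neg_term (p w : ℂ) (k : ℤ) :
    thetaCoeff (p ^ 2) k * (-w) ^ k = p ^ (k * (k - 1)) * w ^ k := by
  have hsign : (-1 : ℂ) ^ k * (-1) ^ k = 1 := by rw [← mul_zpow]; simp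
  rw [thetaCoeff_sq, neg_eq_neg_one_mul w, mul_zpow]
  linear_combination p ^ (k * (k - 1)) * w ^ k * hsign

theorem thetaSeries_sq_neg_mul_term (hp0 : p ≠ 0) (w : ℂ) (k : ℤ) :
    thetaCoeff (p ^ 2) k * (-(p * w)) ^ k = p ^ (k ^ 2) * w ^ k := by
  rw [thetaSeries_sq_neg_term, mul_zpow, ← mul_assoc, ← zpow_add₀ hp0]
  ring_nf

theorem thetaSeries_mul_term_even (hp0 : p ≠ 0) {u v : ℂ} (hu : u ≠ 0) (hv : v ≠ 0) (k l : ℤ) :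
    thetaCoeff p (k + l) * u ^ (k + l) * (thetaCoeff p (k - l) * v ^ (k - l)) =
      p ^ (k * (k - 1)) * (u * v) ^ k * (p ^ (l ^ 2) * (u / v) ^ l) := by
  rw [mul_mul_mul_comm, thetaCoeff_add_mul_thetaCoeff_sub hp0, zpow_add₀ hp0, zpow_add₀ hu,
    zpow_sub₀ hv, mul_zpow, div_zpow]
  ring

theorem thetaSeries_mul_term_odd (hp0 : p ≠ 0) {u v : ℂ} (hu : u ≠ 0) (hv : v ≠ 0) (k l : ℤ) :
    thetaCoeff p (k + l) * u ^ (k + l) * (thetaCoeff p (k - l + 1) * v ^ (k - l + 1)) =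
      -v * (p ^ (k ^ 2) * (u * v) ^ k * (p ^ (l * (l - 1)) * (u / v) ^ l)) := by
  have hexp : p ^ (k - l) * (p ^ (k * (k - 1)) * p ^ (l ^ 2)) =
      p ^ (k ^ 2) * p ^ (l * (l - 1)) := by
    simp only [← zpow_add₀ hp0]
    ring_nf
  have heven := thetaSeries_mul_term_even hp0 hu hv k l
  rw [thetaCoeff_add_one hp0, zpow_add_one₀ hv]
  linear_combination (-p ^ (k - l) * v) * heven - v * (u * v) ^ k * (u / v) ^ l * hexp

theorem hasSum_thetaSeries_mul (hp : ‖p‖ < 1) (hp0 : p ≠ 0) {u v : ℂ} (hu : u ≠ 0) (hv : v ≠ 0) :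
    HasSum (fun x : ℤ × ℤ ↦ thetaCoeff p x.1 * u ^ x.1 * (thetaCoeff p x.2 * v ^ x.2))
      (thetaSeries u p * thetaSeries v p) := by
  have hu := (summable_thetaSeries hp hp0 hu).norm
  have hv := (summable_thetaSeries hp hp0 hv).norm
  rw [thetaSeries, thetaSeries, tsum_mul_tsum_of_summable_norm hu hv]
  exact (summable_mul_of_summable_norm hu hv).hasSum

theorem thetaSeries_mul (hp : ‖p‖ < 1) (hp0 : p ≠ 0) {u v : ℂ} (hu : u ≠ 0) (hv : v ≠ 0) :
    thetaSeries u p * thetaSeries v p =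
      thetaSeries (-(u * v)) (p ^ 2) * thetaSeries (-(p * (u / v))) (p ^ 2) -
        v * (thetaSeries (-(p * (u * v))) (p ^ 2) * thetaSeries (-(u / v)) (p ^ 2)) := by
  have hp2 : ‖p ^ 2‖ < 1 := by simpa using pow_lt_one₀ (norm_nonneg p) hp two_ne_zero
  have huv : u * v ≠ 0 := mul_ne_zero hu hv
  have hdiv : u / v ≠ 0 := div_ne_zero hu hv
  have hprod := hasSum_thetaSeries_mul hp hp0 hu hv
  have heven := hasSum_thetaSeries_mul hp2 (pow_ne_zero 2 hp0) (neg_ne_zero.2 huv)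
    (neg_ne_zero.2 (mul_ne_zero hp0 hdiv))
  have hodd := hasSum_thetaSeries_mul hp2 (pow_ne_zero 2 hp0)
    (neg_ne_zero.2 (mul_ne_zero hp0 huv)) (neg_ne_zero.2 hdiv)
  simp only [thetaSeries_sq_neg_term, thetaSeries_sq_neg_mul_term hp0] at heven hodd
  rw [← hprod.tsum_eq, tsum_int_prod_int_eq_add hprod.summable, ← heven.tsum_eq, ← hodd.tsum_eq,
    sub_eq_add_neg, ← neg_mul, ← tsum_mul_left]
  simp only [thetaSeries_mul_term_even hp0 hu hv, thetaSeries_mul_term_odd hp0 hu hv]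

end ThetaSeries

section Theta

variable {p : ℂ}

theorem theta_zero_right (z : ℂ) : theta z 0 = 1 - z := by
  rw [theta_eq_qPochhammerInf_mul (by simp), qPochhammerInf_eq_one_sub_mul (by simp)]
  simp [qPochhammerInf]

theorem theta_inv (hp : ‖p‖ < 1) {z : ℂ} (hz : z ≠ 0) : theta z⁻¹ p = -z⁻¹ * theta z p := by
  rw [theta_eq_qPochhammerInf_mul hp, theta_eq_qPochhammerInf_mul hp,
    qPochhammerInf_eq_one_sub_mul hp z⁻¹, qPochhammerInf_eq_one_sub_mul hp z, inv_inv, mul_comm z p,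
    mul_comm z⁻¹ p]
  field_simp
  ring

theorem theta_eq_zero_iff (hp : ‖p‖ < 1) {z : ℂ} (hz : z ≠ 0) :
    theta z p = 0 ↔ ∃ m : ℤ, z = p ^ m := by
  rw [theta_eq_qPochhammerInf_mul hp, mul_eq_zero, qPochhammerInf_eq_zero_iff hp,
    qPochhammerInf_eq_zero_iff hp]
  constructor
  · rintro (⟨j, hj⟩ | ⟨j, hj⟩)
    · exact ⟨-j, by rw [zpow_neg, zpow_natCast]; exact eq_inv_of_mul_eq_one_left hj⟩
    · refine ⟨(j + 1 : ℕ), ?_⟩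
      rw [zpow_natCast]
      field_simp at hj
      linear_combination -hj
  · rintro ⟨j | j, rfl⟩
    · rcases j with - | j
      · exact .inl ⟨0, by simp⟩
      · refine .inr ⟨j, ?_⟩
        rw [Int.ofNat_eq_natCast, zpow_natCast] at hz ⊢
        rw [mul_right_comm, ← pow_succ', mul_inv_cancel₀ hz]
    · refine .inl ⟨j + 1, ?_⟩
      rw [zpow_negSucc] at hz ⊢
      exact inv_mul_cancel₀ fun h ↦ hz (by rw [h, inv_zero])

theorem theta_one (hp : ‖p‖ < 1) : theta 1 p = 0 :=
  (theta_eq_zero_iff hp one_ne_zero).2 ⟨0, by simp⟩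

theorem theta_div_eq_zero (hp : ‖p‖ < 1) {z w : ℂ} (hz : z ≠ 0) (hw : w ≠ 0)
    (hz0 : theta z p = 0) (hw0 : theta w p = 0) : theta (z / w) p = 0 := by
  rcases eq_or_ne p 0 with rfl | hp0
  · rw [theta_zero_right, sub_eq_zero] at hz0 hw0 ⊢
    rw [← hz0, ← hw0, div_one]
  · obtain ⟨m, rfl⟩ := (theta_eq_zero_iff hp hz).1 hz0
    obtain ⟨l, rfl⟩ := (theta_eq_zero_iff hp hw).1 hw0
    exact (theta_eq_zero_iff hp (div_ne_zero hz hw)).2 ⟨m - l, (zpow_sub₀ hp0 m l).symm⟩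

theorem theta_mul_theta (hp : ‖p‖ < 1) (hp0 : p ≠ 0) {u v A B : ℂ} (hu : u ≠ 0) (hv : v ≠ 0)
    (hA : u * v = A) (hB : u / v = B) :
    qPochhammerInf p p ^ 2 * (theta u p * theta v p) =
      thetaSeries (-A) (p ^ 2) * thetaSeries (-(p * B)) (p ^ 2) -
        v * (thetaSeries (-(p * A)) (p ^ 2) * thetaSeries (-B) (p ^ 2)) := by
  rw [← hA, ← hB, ← thetaSeries_mul hp hp0 hu hv,
    jacobi_triple_product hp hp0 hu,
    jacobi_triple_product hp hp0 hv]
  ring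

theorem weierstrass_three_term (hp : ‖p‖ < 1) {x y c d : ℂ} (hx : x ≠ 0) (hy : y ≠ 0) (hc : c ≠ 0)
    (hd : d ≠ 0) :
    theta (x * c) p * theta (y * d) p * (theta (c * d) p * theta (y / x) p) =
      theta c p * theta (y / x * d) p * (theta (x * (c * d)) p * theta y p) -
        y / x * (theta (x / y * c) p * theta d p * (theta (y * (c * d)) p * theta x p)) := by
  rcases eq_or_ne p 0 with rfl | hp0
  · simp only [theta_zero_right]
    field_simp
    ring
  set P := qPochhammerInf p p
  -- All six products are minors of a 2 × 4 matrix with columns indexed by `X`, `Y`, `Z`, `W`, up to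
  -- rescaling the columns, so the claim is a Plücker relation.
  let X := x * y * c * d
  let Y := y * c * d / x
  let Z := x * c * d / y
  let W := x * c / (y * d)
  have hcd := mul_ne_zero hc hd
  have hyx := div_ne_zero hy hx
  have hXW := theta_mul_theta (A := X) (B := W) hp hp0 (mul_ne_zero hx hc) (mul_ne_zero hy hd)
    (by ring) rfl
  have hYZ := theta_mul_theta (A := Y) (B := Z) hp hp0 hcd hyx (by ring) (by unfold Z; field_simp)
  have hXZ := theta_mul_theta (A := X) (B := Z) hp hp0 (mul_ne_zero hx hcd) hy (by ring) (by ring)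
  have hYW := theta_mul_theta (A := Y) (B := W) hp hp0 hc (mul_ne_zero hyx hd) (by ring)
    (by unfold W; field_simp)
  have hXY := theta_mul_theta (A := X) (B := Y) hp hp0 (mul_ne_zero hy hcd) hx (by ring) (by ring)
  have hZW := theta_mul_theta (A := Z) (B := W) hp hp0 (mul_ne_zero (div_ne_zero hx hy) hc) hd
    (by ring) (by unfold W; field_simp)
  refine mul_left_cancel₀ (pow_ne_zero 4 (qPochhammerInf_self_ne_zero hp)) ?_
  calc P ^ 4 * (theta (x * c) p * theta (y * d) p * (theta (c * d) p * theta (y / x) p))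
      = P ^ 2 * (theta (x * c) p * theta (y * d) p) *
          (P ^ 2 * (theta (c * d) p * theta (y / x) p)) := by ring
    _ = P ^ 2 * (theta c p * theta (y / x * d) p) *
          (P ^ 2 * (theta (x * (c * d)) p * theta y p)) -
        y / x * (P ^ 2 * (theta (x / y * c) p * theta d p) *
          (P ^ 2 * (theta (y * (c * d)) p * theta x p))) := by
      rw [hXW, hYZ, hXZ, hYW, hXY, hZW]
      field_simp
      ring
    _ = _ := by ring

end Theta

/-- Kronecker's theta function `θ(xc) / (θ(x) θ(c))`, the elementary summand of the expansion: as a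
function of `x` its poles are simple and lie at the integer powers of `p`. -/
noncomputable def kroneckerTheta (x c p : ℂ) : ℂ := theta (x * c) p / (theta x p * theta c p)

/-- The theta quotient in `z` with zeros `b k` for `k ∈ u` and poles `a i` for `i ∈ s`, up to powers
of `p`. Zeros and poles carry separate index sets so that one of each can be split off at will. -/
noncomputable def thetaQuotient {ι κ : Type*} (a : ι → ℂ) (b : κ → ℂ) (s : Finset ι)
    (u : Finset κ) (z p : ℂ) : ℂ :=
  (∏ k ∈ u, theta (z / b k) p) / ∏ i ∈ s, theta (z / a i) p

section Expansion

variable {p : ℂ}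

theorem kroneckerTheta_mul_theta_div (hp : ‖p‖ < 1) {x y c d : ℂ} (hx : x ≠ 0) (hy : y ≠ 0)
    (hc : c ≠ 0) (hd : d ≠ 0) (hθx : theta x p ≠ 0) (hθy : theta y p ≠ 0)
    (hθyx : theta (y / x) p ≠ 0) (hθc : theta c p ≠ 0) (hθcd : theta (c * d) p ≠ 0) :
    kroneckerTheta x c p * (theta (y * d) p / theta y p) =
      kroneckerTheta x (c * d) p * (theta (y / x * d) p / theta (y / x) p) +
        kroneckerTheta y (c * d) p * theta d p * kroneckerTheta (x / y) c p := by
  have hinv : theta (x / y) p = -(x / y) * theta (y / x) p := by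
    rw [← inv_div y x, theta_inv hp (div_ne_zero hy hx), inv_div]
  have hthree := weierstrass_three_term hp hx hy hc hd
  simp only [kroneckerTheta, hinv]
  field_simp at hthree ⊢
  linear_combination hthree

theorem kroneckerTheta_div_mul_theta_div (hp : ‖p‖ < 1) {t α β γ c : ℂ} (ht : t ≠ 0) (hα : α ≠ 0)
    (hβ : β ≠ 0) (hγ : γ ≠ 0) (hc : c ≠ 0) (hθtγ : theta (t / γ) p ≠ 0)
    (hθtα : theta (t / α) p ≠ 0) (hθγα : theta (γ / α) p ≠ 0) (hθc : theta c p ≠ 0)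
    (hθcαβ : theta (c * (α / β)) p ≠ 0) :
    kroneckerTheta (t / γ) c p * (theta (t / β) p / theta (t / α) p) =
      kroneckerTheta (t / γ) (c * (α / β)) p * (theta (γ / β) p / theta (γ / α) p) +
        kroneckerTheta (t / α) (c * (α / β)) p * theta (α / β) p *
          kroneckerTheta (α / γ) c p := by
  have hyx : t / α / (t / γ) = γ / α := div_div_div_cancel_left' _ _ ht
  have hfay := kroneckerTheta_mul_theta_div hp (div_ne_zero ht hγ) (div_ne_zero ht hα) hc
    (div_ne_zero hα hβ) hθtγ hθtα (by rwa [hyx]) hθc hθcαβ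
  rwa [hyx, div_div_div_cancel_left' _ _ ht, div_mul_div_cancel₀ hα, div_mul_div_cancel₀ hα]
    at hfay

theorem theta_div_ne_zero_or (hp : ‖p‖ < 1) {α β c : ℂ} (hα : α ≠ 0) (hβ : β ≠ 0) (hc : c ≠ 0)
    (hθ : theta (α / β) p ≠ 0) : theta (c / α) p ≠ 0 ∨ theta (c / β) p ≠ 0 := by
  by_contra! hzero
  refine hθ ?_
  rw [← div_div_div_cancel_left' _ _ hc]
  exact theta_div_eq_zero hp (div_ne_zero hc hβ) (div_ne_zero hc hα) hzero.2 hzero.1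

variable {ι κ : Type*} {a : ι → ℂ} {b : κ → ℂ} {s : Finset ι} {u : Finset κ} {t : ℂ}

theorem thetaQuotient_insert_right [DecidableEq κ] {j : κ} (hj : j ∉ u) :
    thetaQuotient a b s (insert j u) t p = theta (t / b j) p * thetaQuotient a b s u t p := by
  rw [thetaQuotient, thetaQuotient, Finset.prod_insert hj, mul_div_assoc]

theorem thetaQuotient_insert_left [DecidableEq ι] {i : ι} (hi : i ∉ s) :
    thetaQuotient a b (insert i s) u t p = thetaQuotient a b s u t p / theta (t / a i) p := by
  rw [thetaQuotient, thetaQuotient, Finset.prod_insert hi, div_div, mul_comm (theta (t / a i) p)]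

theorem thetaQuotient_singleton_singleton {i : ι} {j : κ} (hai : a i ≠ 0)
    (hθc : theta (a i / b j) p ≠ 0) :
    thetaQuotient a b {i} {j} t p =
      kroneckerTheta (t / a i) (a i / b j) p * thetaQuotient a b ∅ {j} (a i) p := by
  simp only [thetaQuotient, kroneckerTheta, Finset.prod_singleton, Finset.prod_empty, div_one,
    div_mul_div_cancel₀ hai]
  field_simp

theorem thetaQuotient_insert_insert_eq_sum [DecidableEq ι] [DecidableEq κ] (hp : ‖p‖ < 1)
    {i : ι} {j : κ} (hi : i ∉ s) (hj : j ∉ u) {c : ℂ} (ht : t ≠ 0) (ha : ∀ r, a r ≠ 0)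
    (hbj : b j ≠ 0) (hc : c ≠ 0) (hθti : theta (t / a i) p ≠ 0)
    (hθt : ∀ r ∈ s, theta (t / a r) p ≠ 0) (hθa : ∀ r ∈ s, theta (a r / a i) p ≠ 0)
    (hθc : theta c p ≠ 0) (hθcd : theta (c * (a i / b j)) p ≠ 0)
    (hexp : ∀ z ∈ ({t, a i} : Set ℂ), thetaQuotient a b s u z p =
      ∑ r ∈ s, kroneckerTheta (z / a r) c p * thetaQuotient a b (s.erase r) u (a r) p) :
    thetaQuotient a b (insert i s) (insert j u) t p =
      ∑ r ∈ insert i s, kroneckerTheta (t / a r) (c * (a i / b j)) p *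
        thetaQuotient a b ((insert i s).erase r) (insert j u) (a r) p := by
  have hterm : ∀ r ∈ s,
      kroneckerTheta (t / a r) c p * thetaQuotient a b (s.erase r) u (a r) p *
          (theta (t / b j) p / theta (t / a i) p) =
        kroneckerTheta (t / a r) (c * (a i / b j)) p *
            thetaQuotient a b ((insert i s).erase r) (insert j u) (a r) p +
          kroneckerTheta (t / a i) (c * (a i / b j)) p * theta (a i / b j) p *
            (kroneckerTheta (a i / a r) c p * thetaQuotient a b (s.erase r) u (a r) p) := by
    intro r hr
    rw [Finset.erase_insert_of_ne (by rintro rfl; exact hi hr), thetaQuotient_insert_right hj,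
      thetaQuotient_insert_left (mt Finset.mem_of_mem_erase hi)]
    linear_combination thetaQuotient a b (s.erase r) u (a r) p *
      kroneckerTheta_div_mul_theta_div hp ht (ha i) hbj (ha r) hc (hθt r hr) hθti (hθa r hr) hθc
        hθcd
  calc thetaQuotient a b (insert i s) (insert j u) t p
      = thetaQuotient a b s u t p * (theta (t / b j) p / theta (t / a i) p) := by
        rw [thetaQuotient_insert_right hj, thetaQuotient_insert_left hi]
        ring
    _ = _ := by
        rw [hexp t (by simp), Finset.sum_mul, Finset.sum_congr rfl hterm, Finset.sum_add_distrib,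
          ← Finset.mul_sum, ← hexp (a i) (by simp), Finset.sum_insert hi, Finset.erase_insert hi,
          thetaQuotient_insert_right hj]
        ring

theorem exists_eq_insert_and_theta_div_ne_zero [DecidableEq ι] (hp : ‖p‖ < 1)
    (hs : s.Nontrivial) (ha : ∀ i, a i ≠ 0)
    (hθa : (s : Set ι).Pairwise fun i j ↦ theta (a i / a j) p ≠ 0) {c : ℂ} (hc : c ≠ 0) :
    ∃ i s', i ∉ s' ∧ s = insert i s' ∧ theta (c / a i) p ≠ 0 := by
  obtain ⟨i, hi, j, hj, hij⟩ := hs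
  rcases theta_div_ne_zero_or hp (ha i) (ha j) hc (hθa hi hj hij) with h | h
  · exact ⟨i, s.erase i, s.notMem_erase i, (Finset.insert_erase hi).symm, h⟩
  · exact ⟨j, s.erase j, s.notMem_erase j, (Finset.insert_erase hj).symm, h⟩

theorem thetaQuotient_eq_sum [DecidableEq ι] (hp : ‖p‖ < 1) (ha : ∀ i, a i ≠ 0)
    (hb : ∀ k, b k ≠ 0) (hcard : s.card = u.card) (ht : t ≠ 0)
    (hθt : ∀ i ∈ s, theta (t / a i) p ≠ 0)
    (hθa : (s : Set ι).Pairwise fun i j ↦ theta (a i / a j) p ≠ 0)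
    (hθc : theta ((∏ i ∈ s, a i) / ∏ k ∈ u, b k) p ≠ 0) :
    thetaQuotient a b s u t p =
      ∑ r ∈ s, kroneckerTheta (t / a r) ((∏ i ∈ s, a i) / ∏ k ∈ u, b k) p *
        thetaQuotient a b (s.erase r) u (a r) p := by
  classical
  have hbal0 (s : Finset ι) (u : Finset κ) : (∏ i ∈ s, a i) / ∏ k ∈ u, b k ≠ 0 :=
    div_ne_zero (Finset.prod_ne_zero_iff.2 fun i _ ↦ ha i)
      (Finset.prod_ne_zero_iff.2 fun k _ ↦ hb k)
  induction u using Finset.induction_on generalizing s t with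
  | empty =>
    obtain rfl := Finset.card_eq_zero.1 hcard
    simp [theta_one hp] at hθc
  | insert j u hj ih =>
    rw [Finset.card_insert_of_notMem hj] at hcard
    rcases u.eq_empty_or_nonempty with rfl | hu
    · obtain ⟨i, rfl⟩ := Finset.card_eq_one.1 hcard
      rw [insert_empty_eq, Finset.prod_singleton, Finset.prod_singleton] at hθc
      simpa using thetaQuotient_singleton_singleton (ha i) hθc
    · have hs : s.Nontrivial := Finset.one_lt_card_iff_nontrivial.1 (by
        have := hu.card_pos; omega)
      obtain ⟨i, s, hi, rfl, hθi⟩ := exists_eq_insert_and_theta_div_ne_zero hp hs ha hθa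
        (mul_ne_zero (hbal0 s (insert j u)) (hb j))
      rw [Finset.card_insert_of_notMem hi, Nat.add_right_cancel_iff] at hcard
      rw [Finset.coe_insert, Set.pairwise_insert_of_notMem (by simpa using hi)] at hθa
      rw [Finset.forall_mem_insert] at hθt
      have hmul : (∏ k ∈ insert i s, a k) / ∏ k ∈ insert j u, b k =
          (∏ k ∈ s, a k) / (∏ k ∈ u, b k) * (a i / b j) := by
        rw [Finset.prod_insert hi, Finset.prod_insert hj, mul_div_mul_comm, mul_comm]
      rw [hmul, mul_assoc, div_mul_cancel₀ _ (hb j), mul_div_cancel_right₀ _ (ha i)] at hθi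
      rw [hmul] at hθc ⊢
      refine thetaQuotient_insert_insert_eq_sum hp hi hj ht ha (hb j) (hbal0 s u) hθt.1 hθt.2
        (fun r hr ↦ (hθa.2 r hr).2) hθi hθc ?_
      rintro z (rfl | rfl)
      · exact ih hcard ht hθt.2 hθa.1 hθi
      · exact ih hcard (ha i) (fun r hr ↦ (hθa.2 r hr).1) hθa.1 hθi

end Expansion

theorem theta_partial_fraction_expansion (p : ℂ) (hp : ‖p‖ < 1) (n : ℕ)
    (t : ℂ) (a b : Fin n → ℂ) (ht : t ≠ 0) (ha : ∀ r, a r ≠ 0) (hb : ∀ r, b r ≠ 0)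
    (hbal : ∀ m : ℤ, (∏ k, a k) / ∏ k, b k ≠ p ^ m)
    (hdist : ∀ j k, j ≠ k → ∀ m : ℤ, a j / a k ≠ p ^ m)
    (hta : ∀ r, ∀ m : ℤ, t / a r ≠ p ^ m) :
    ∏ k, theta (t / b k) p / theta (t / a k) p =
      ∑ r, theta (t * (∏ k, a k) / (a r * ∏ k, b k)) p /
            (theta (t / a r) p * theta ((∏ k, a k) / ∏ k, b k) p) *
          ((∏ j, theta (a r / b j) p) /
            ∏ j ∈ Finset.univ.erase r, theta (a r / a j) p) := by
  have theta_ne_zero {z : ℂ} (hz : z ≠ 0) (hzp : ∀ m : ℤ, z ≠ p ^ m) : theta z p ≠ 0 := by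
    rw [Ne, theta_eq_zero_iff hp hz]
    exact not_exists.2 hzp
  have hθt (r) (_ : r ∈ Finset.univ) : theta (t / a r) p ≠ 0 :=
    theta_ne_zero (div_ne_zero ht (ha r)) (hta r)
  have hθa : ((Finset.univ : Finset (Fin n)) : Set (Fin n)).Pairwise
      fun i j ↦ theta (a i / a j) p ≠ 0 := fun i _ j _ hij ↦
    theta_ne_zero (div_ne_zero (ha i) (ha j)) (hdist i j hij)
  have hθc : theta ((∏ k, a k) / ∏ k, b k) p ≠ 0 :=
    theta_ne_zero (div_ne_zero (Finset.prod_ne_zero_iff.2 fun k _ ↦ ha k)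
      (Finset.prod_ne_zero_iff.2 fun k _ ↦ hb k)) hbal
  have hexp := thetaQuotient_eq_sum hp ha hb rfl ht hθt hθa hθc
  simpa only [thetaQuotient, kroneckerTheta, div_mul_div_comm, Finset.prod_div_distrib] using hexp
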